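/- arXiv:1401.6905 — 3 statements merged into one kernel-verified Lean document; each statement's English description precedes it below -/
import Mathlib

section
/- Assume c < 0 and that the following large-deviations-type bound holds: for all δ > 0 and ε > 0 there exist N ∈ ℕ and p > 0 such that for every natural number n ≥ N, P(|(nδ)^{-1} ∫₀^{nδ} f(X_s) ds − c| > ε) ≤ e^{−p n δ}. Then for every ε with 0 < ε < −c there exists a finite constant C̄ such that E[∫₀^{τ∧T} (f(X_s) − (c + ε)) ds] ≤ C̄ for every stopping time τ and every T ≥ 0. In particular there exists d < 0 (namely d = c + ε) such that sup_{τ, T} E[∫₀^{τ∧T} (f(X_s) − d) ds] < ∞, i.e. assumption (B1) holds. -/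
open MeasureTheory Filter Set
open scoped ENNReal Topology

/-!
Only upward deviations of `I t = ∫₀ᵗ (f(X_s) - d) ds`, with `d = c + ε`, matter. If `|f - d| ≤ K`
and `n = ⌊t / δ⌋`, then `I t` exceeds `I (n δ)` by at most `K δ`, and `I (n δ)` is nonpositive off
the event `A n = {I (n δ) > 0}` and at most `K δ n` on it. Hence, simultaneously for all `t ≥ 0`,
`I t ≤ K δ + ∑ n, K δ n 1_{A n}`. The deviation bound makes `P (A n)` decay exponentially, so the
right-hand side is integrable, and it dominates `I (τ ∧ T)` for every random time `τ ≥ 0`.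
-/

section Measurability

theorem measurable_uncurry_of_isProgressive {Ω ι β : Type*} {m0 : MeasurableSpace Ω}
    [Preorder ι] [IsDirectedOrder ι] [Nonempty ι] [(atTop : Filter ι).IsCountablyGenerated]
    [TopologicalSpace ι] [ClosedIicTopology ι] [MeasurableSpace ι] [OpensMeasurableSpace ι]
    [MeasurableSpace β] {𝓕 : Filtration ι m0} {X : ι → Ω → β} (hX : IsProgressive 𝓕 X) :
    Measurable (Function.uncurry X) := by
  obtain ⟨u, hu⟩ := exists_seq_tendsto (atTop : Filter ι)
  intro S hS
  have cover : Function.uncurry X ⁻¹' S = ⋃ n, Prod.map Subtype.val id ''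
      ((fun q : Iic (u n) × Ω => X q.1 q.2) ⁻¹' S) := by
    ext ⟨i, ω⟩
    obtain ⟨n, hn⟩ := (hu.eventually_ge_atTop i).exists
    simp only [mem_preimage, mem_iUnion, mem_image, Prod.exists, Prod.map_apply, id_eq,
      Prod.mk.injEq]
    constructor
    · exact fun h => ⟨n, ⟨i, hn⟩, ω, h, rfl, rfl⟩
    · rintro ⟨_, _, _, h, rfl, rfl⟩
      exact h
  rw [cover]
  refine .iUnion fun n => ?_
  refine ((MeasurableEmbedding.subtype_coe measurableSet_Iic).prodMap .id).measurableSet_image' ?_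
  exact ((hX (u n)).mono (sup_le_sup le_rfl (MeasurableSpace.comap_mono (𝓕.le (u n)))) le_rfl) hS

variable {Ω F : Type*} [MeasurableSpace Ω] [NormedAddCommGroup F] [NormedSpace ℝ F]
  {ν : Measure ℝ} [SFinite ν] {Y : ℝ → Ω → F} {a b : Ω → ℝ}

theorem stronglyMeasurable_setIntegral_Ioc (hY : StronglyMeasurable (Function.uncurry Y))
    (ha : Measurable a) (hb : Measurable b) :
    StronglyMeasurable fun ω => ∫ s in Ioc (a ω) (b ω), Y s ω ∂ν := by
  have hS : MeasurableSet {q : Ω × ℝ | q.2 ∈ Ioc (a q.1) (b q.1)} :=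
    (measurableSet_lt (ha.comp measurable_fst) measurable_snd).inter
      (measurableSet_le measurable_snd (hb.comp measurable_fst))
  simp_rw [← integral_indicator measurableSet_Ioc]
  exact ((hY.comp_measurable measurable_swap).indicator hS).integral_prod_right'

theorem stronglyMeasurable_intervalIntegral (hY : StronglyMeasurable (Function.uncurry Y))
    (ha : Measurable a) (hb : Measurable b) :
    StronglyMeasurable fun ω => ∫ s in (a ω)..(b ω), Y s ω ∂ν :=
  (stronglyMeasurable_setIntegral_Ioc hY ha hb).sub (stronglyMeasurable_setIntegral_Ioc hY hb ha)

end Measurability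

section Paths

variable {u : ℝ → ℝ} {K : ℝ}

theorem intervalIntegrable_of_abs_le (hu : Measurable u) (huK : ∀ s, |u s| ≤ K) (a b : ℝ) :
    IntervalIntegrable u volume a b :=
  (intervalIntegrable_const (c := K)).mono_fun' hu.aestronglyMeasurable (.of_forall huK)

theorem abs_integral_le_of_abs_le (huK : ∀ s, |u s| ≤ K) {a b : ℝ} (hab : a ≤ b) :
    |∫ s in a..b, u s| ≤ K * (b - a) := by
  have h := intervalIntegral.norm_integral_le_of_norm_le_const (f := u) (a := a) (b := b)
    fun s _ => huK s
  rwa [abs_of_nonneg (sub_nonneg.2 hab)] at h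

theorem integral_le_add_ite_floor (hu : Measurable u) (huK : ∀ s, |u s| ≤ K) {δ t : ℝ}
    (hδ : 0 < δ) (ht : 0 ≤ t) :
    ∫ s in (0 : ℝ)..t, u s ≤
      K * δ + if 0 < ∫ s in (0 : ℝ)..(⌊t / δ⌋₊ * δ), u s then K * δ * ⌊t / δ⌋₊ else 0 := by
  set n := ⌊t / δ⌋₊
  have hK : 0 ≤ K := (abs_nonneg _).trans (huK 0)
  have hnt : n * δ ≤ t := (le_div_iff₀ hδ).1 (Nat.floor_le (div_nonneg ht hδ.le))
  have htn : t < (n + 1) * δ := (div_lt_iff₀ hδ).1 (Nat.lt_floor_add_one _)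
  have head : ∫ s in (0 : ℝ)..(n * δ), u s ≤ K * δ * n :=
    calc _ ≤ K * (n * δ - 0) :=
          (le_abs_self _).trans (abs_integral_le_of_abs_le huK (by positivity))
      _ = K * δ * n := by ring
  have tail : ∫ s in (n * δ)..t, u s ≤ K * δ :=
    calc _ ≤ K * (t - n * δ) := (le_abs_self _).trans (abs_integral_le_of_abs_le huK hnt)
      _ ≤ K * δ := mul_le_mul_of_nonneg_left (by linarith) hK
  rw [← intervalIntegral.integral_add_adjacent_intervals
    (intervalIntegrable_of_abs_le hu huK 0 (n * δ)) (intervalIntegrable_of_abs_le hu huK _ t)]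
  split_ifs with h <;> linarith

theorem integral_sub_const_pos_iff_lt_average {d t : ℝ} (ht : 0 < t)
    (hu : IntervalIntegrable u volume 0 t) :
    0 < ∫ s in (0 : ℝ)..t, (u s - d) ↔ d < t⁻¹ * ∫ s in (0 : ℝ)..t, u s := by
  rw [intervalIntegral.integral_sub hu intervalIntegrable_const, intervalIntegral.integral_const,
    sub_zero, smul_eq_mul, sub_pos, lt_inv_mul_iff₀ ht]

end Paths

theorem summable_natCast_mul_of_le_exp {b : ℕ → ℝ} (hb : ∀ n, 0 ≤ b n) {r : ℝ} (hr : 0 < r)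
    (h : ∀ᶠ n : ℕ in atTop, b n ≤ Real.exp (-r * n)) : Summable fun n : ℕ => n * b n := by
  refine (Real.summable_pow_mul_exp_neg_nat_mul 1 hr).of_norm_bounded_eventually_nat ?_
  filter_upwards [h] with n hn
  rw [pow_one, Real.norm_of_nonneg (mul_nonneg n.cast_nonneg (hb n))]
  gcongr

section Processes

variable {Ω : Type*} [MeasurableSpace Ω] {P : Measure Ω}

theorem integral_le_toReal_lintegral {h : Ω → ℝ} {G : Ω → ℝ≥0∞} (hh : Integrable h P)
    (hG : ∫⁻ ω, G ω ∂P ≠ ∞) (hle : ∀ ω, ENNReal.ofReal (h ω) ≤ G ω) :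
    ∫ ω, h ω ∂P ≤ (∫⁻ ω, G ω ∂P).toReal := by
  rw [integral_eq_lintegral_pos_part_sub_lintegral_neg_part hh]
  exact (sub_le_self _ ENNReal.toReal_nonneg).trans (ENNReal.toReal_mono hG (lintegral_mono hle))

variable {Y : ℝ → Ω → ℝ} {K : ℝ}

theorem integrable_integral_min [IsFiniteMeasure P] (hY : Measurable (Function.uncurry Y))
    (hYK : ∀ s ω, |Y s ω| ≤ K) {τ : Ω → ℝ} (hτ : Measurable τ) (hτ0 : ∀ ω, 0 ≤ τ ω) {T : ℝ}
    (hT : 0 ≤ T) : Integrable (fun ω => ∫ s in (0 : ℝ)..(min (τ ω) T), Y s ω) P := by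
  refine .of_bound (stronglyMeasurable_intervalIntegral hY.stronglyMeasurable measurable_const
    (hτ.min measurable_const)).aestronglyMeasurable (K * T) (.of_forall fun ω => ?_)
  have hK : 0 ≤ K := (abs_nonneg _).trans (hYK 0 ω)
  calc |∫ s in (0 : ℝ)..(min (τ ω) T), Y s ω|
      ≤ K * (min (τ ω) T - 0) := abs_integral_le_of_abs_le (hYK · ω) (le_min (hτ0 ω) hT)
    _ ≤ K * T := mul_le_mul_of_nonneg_left (by simp) hK

theorem lintegral_iSup_ofReal_integral_le (hY : Measurable (Function.uncurry Y))
    (hYK : ∀ s ω, |Y s ω| ≤ K) {δ : ℝ} (hδ : 0 < δ) :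
    ∫⁻ ω, ⨆ (t : ℝ) (_ : 0 ≤ t), ENNReal.ofReal (∫ s in (0 : ℝ)..t, Y s ω) ∂P ≤
      ENNReal.ofReal (K * δ) * P univ +
        ∑' n : ℕ, ENNReal.ofReal (K * δ * n) * P {ω | 0 < ∫ s in (0 : ℝ)..(n * δ), Y s ω} := by
  set A : ℕ → Set Ω := fun n => {ω | 0 < ∫ s in (0 : ℝ)..(n * δ), Y s ω}
  have hA (n : ℕ) : MeasurableSet (A n) := measurableSet_lt measurable_const
    (stronglyMeasurable_intervalIntegral hY.stronglyMeasurable measurable_const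
      measurable_const).measurable
  calc _ ≤ ∫⁻ ω, (ENNReal.ofReal (K * δ) +
        ∑' n : ℕ, (A n).indicator (fun _ => ENNReal.ofReal (K * δ * n)) ω) ∂P := by
        refine lintegral_mono fun ω => iSup₂_le fun t ht => ?_
        have hpath : Measurable (Y · ω) := hY.comp measurable_prodMk_right
        refine (ENNReal.ofReal_le_ofReal
          (integral_le_add_ite_floor hpath (hYK · ω) hδ ht)).trans ?_
        refine ENNReal.ofReal_add_le.trans (add_le_add_right ?_ _)
        refine le_trans (le_of_eq ?_) (ENNReal.le_tsum ⌊t / δ⌋₊)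
        simp only [A, indicator_apply, mem_ofPred_eq, apply_ite ENNReal.ofReal, ENNReal.ofReal_zero]
    _ = _ := by
        rw [lintegral_add_left measurable_const, lintegral_const,
          lintegral_tsum fun n => (measurable_const.indicator (hA n)).aemeasurable]
        simp only [lintegral_indicator_const (hA _), A]

theorem lintegral_iSup_ofReal_integral_ne_top [IsFiniteMeasure P]
    (hY : Measurable (Function.uncurry Y)) (hYK : ∀ s ω, |Y s ω| ≤ K) {δ : ℝ} (hδ : 0 < δ)
    (hsum : Summable fun n : ℕ => n * P.real {ω | 0 < ∫ s in (0 : ℝ)..(n * δ), Y s ω}) :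
    ∫⁻ ω, ⨆ (t : ℝ) (_ : 0 ≤ t), ENNReal.ofReal (∫ s in (0 : ℝ)..t, Y s ω) ∂P ≠ ∞ := by
  refine ne_top_of_le_ne_top (ENNReal.add_ne_top.2 ⟨by finiteness, ?_⟩)
    (lintegral_iSup_ofReal_integral_le hY hYK hδ)
  convert (hsum.mul_left (K * δ)).tsum_ofReal_ne_top using 4 with n
  rw [← mul_assoc, ENNReal.ofReal_mul' measureReal_nonneg, ofReal_measureReal]

end Processes

theorem stmt9_general {Ω : Type*} [MeasurableSpace Ω] (P : Measure Ω) [IsFiniteMeasure P]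
    {Y : ℝ → Ω → ℝ} (hY : Measurable (Function.uncurry Y)) {K : ℝ} (hYK : ∀ s ω, |Y s ω| ≤ K)
    {d δ p : ℝ} (hδ : 0 < δ) (hp : 0 < p)
    (hLD : ∀ᶠ n : ℕ in atTop, P {ω | d < (n * δ)⁻¹ * ∫ s in (0 : ℝ)..(n * δ), Y s ω} ≤
      ENNReal.ofReal (Real.exp (-p * n * δ))) :
    ∃ C : ℝ, ∀ τ : Ω → ℝ, Measurable τ → (∀ ω, 0 ≤ τ ω) → ∀ T : ℝ, 0 ≤ T →
      Integrable (fun ω => ∫ s in (0 : ℝ)..(min (τ ω) T), (Y s ω - d)) P ∧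
        ∫ ω, (∫ s in (0 : ℝ)..(min (τ ω) T), (Y s ω - d)) ∂P ≤ C := by
  have hZ : Measurable (Function.uncurry fun s ω => Y s ω - d) := hY.sub_const d
  have hZK (s : ℝ) (ω : Ω) : |Y s ω - d| ≤ K + |d| :=
    (abs_sub _ _).trans (add_le_add_left (hYK s ω) _)
  have hdecay : ∀ᶠ n : ℕ in atTop,
      P.real {ω | 0 < ∫ s in (0 : ℝ)..(n * δ), (Y s ω - d)} ≤ Real.exp (-(p * δ) * n) := by
    filter_upwards [hLD, eventually_gt_atTop 0] with n hn hn0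
    rw [show -(p * δ) * n = -p * n * δ by ring]
    refine ENNReal.toReal_le_of_le_ofReal (Real.exp_nonneg _)
      ((measure_mono fun ω hω => ?_).trans hn)
    have hpath : Measurable (Y · ω) := hY.comp measurable_prodMk_right
    exact (integral_sub_const_pos_iff_lt_average (by positivity)
      (intervalIntegrable_of_abs_le hpath (hYK · ω) _ _)).1 hω
  have hsup := lintegral_iSup_ofReal_integral_ne_top hZ hZK hδ
    (summable_natCast_mul_of_le_exp (fun _ => measureReal_nonneg) (mul_pos hp hδ) hdecay)
  refine ⟨(∫⁻ ω, ⨆ (t : ℝ) (_ : 0 ≤ t), ENNReal.ofReal (∫ s in (0 : ℝ)..t, (Y s ω - d)) ∂P).toReal,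
    fun τ hτ hτ0 T hT => ?_⟩
  have hint := integrable_integral_min (P := P) hZ hZK hτ hτ0 hT
  exact ⟨hint, integral_le_toReal_lintegral hint hsup fun ω =>
    le_iSup₂_of_le (min (τ ω) T) (le_min (hτ0 ω) hT) le_rfl⟩

/-- the large-deviations-type bound (L) together with `c = μ(f) < 0` implies
assumption (B1): for every `0 < ε < −c` there is a finite constant `Cbar` with
`E[∫₀^{τ∧T} (f(X_s) − (c+ε)) ds] ≤ Cbar` for all stopping times `τ` and all `T ≥ 0`. -/
theorem stmt9
    {Ω : Type*} {m0 : MeasurableSpace Ω} (P : Measure Ω) [IsProbabilityMeasure P]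
    (𝓕 : Filtration ℝ m0)
    {E : Type*} [MetricSpace E] [MeasurableSpace E] [BorelSpace E]
    (X : ℝ → Ω → E) (hX : ProgMeasurable 𝓕 X)
    (f : E → ℝ) (hf : Measurable f) (Cf : ℝ) (hfb : ∀ x, |f x| ≤ Cf)
    (c : ℝ) (hc : c < 0)
    (hLD : ∀ δ : ℝ, 0 < δ → ∀ ε : ℝ, 0 < ε → ∃ N : ℕ, ∃ p : ℝ, 0 < p ∧
      ∀ n : ℕ, N ≤ n →
        P {ω | ε < |(↑n * δ)⁻¹ * (∫ s in (0:ℝ)..(↑n * δ), f (X s ω)) - c|}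
          ≤ ENNReal.ofReal (Real.exp (-p * ↑n * δ))) :
    (∀ ε : ℝ, 0 < ε → ε < -c → ∃ Cbar : ℝ,
      ∀ τ : Ω → ℝ, IsStoppingTime 𝓕 (fun ω => (τ ω : WithTop ℝ)) → (∀ ω, 0 ≤ τ ω) → ∀ T : ℝ, 0 ≤ T →
        ∫ ω, (∫ s in (0:ℝ)..(min (τ ω) T), (f (X s ω) - (c + ε))) ∂P ≤ Cbar) ∧
    (∃ d : ℝ, d < 0 ∧ ∃ Cbar : ℝ,
      ∀ τ : Ω → ℝ, IsStoppingTime 𝓕 (fun ω => (τ ω : WithTop ℝ)) → (∀ ω, 0 ≤ τ ω) → ∀ T : ℝ, 0 ≤ T →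
        ∫ ω, (∫ s in (0:ℝ)..(min (τ ω) T), (f (X s ω) - d)) ∂P ≤ Cbar) := by
  have hY : Measurable (Function.uncurry fun s ω => f (X s ω)) :=
    hf.comp (measurable_uncurry_of_isProgressive hX.isProgressive)
  have bound : ∀ ε : ℝ, 0 < ε → ∃ C : ℝ, ∀ τ : Ω → ℝ,
      IsStoppingTime 𝓕 (fun ω => (τ ω : WithTop ℝ)) → (∀ ω, 0 ≤ τ ω) → ∀ T : ℝ, 0 ≤ T →
        ∫ ω, (∫ s in (0 : ℝ)..(min (τ ω) T), (f (X s ω) - (c + ε))) ∂P ≤ C := by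
    intro ε hε
    obtain ⟨N, p, hp, hN⟩ := hLD 1 one_pos ε hε
    obtain ⟨C, hC⟩ := stmt9_general P hY (fun _ _ => hfb _) (d := c + ε) one_pos hp <|
      eventually_atTop.2 ⟨N, fun n hn => (measure_mono fun ω (hω : c + ε < _) =>
        lt_abs.2 (.inl (lt_sub_iff_add_lt'.2 hω))).trans (hN n hn)⟩
    exact ⟨C, fun τ hτ hτ0 T hT =>
      (hC τ ((WithTop.measurable_untopD 0).comp hτ.measurable') hτ0 T hT).2⟩
  exact ⟨fun ε hε _ => bound ε hε, c + -c / 2, by linarith, bound _ (by linarith)⟩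
end

section
/- Suppose d < 0 and γ_r ∈ ℝ are such that E[∫₀^{τ∧T} e^{−α_s} (f(X_s) − d) ds] ≤ γ_r for every stopping time τ and every T ≥ 0. If σ is an integrable stopping time (E[σ] < ∞) such that E[∫₀^σ e^{−α_s} f(X_s) ds + e^{−α_σ} g(X_σ)] ≥ −‖g‖ − ε for some ε ≥ 0, then E[∫₀^σ e^{−α_s} ds] ≤ (γ_r + 2‖g‖ + ε)/(−d). -/
open MeasureTheory Filter Set
open scoped ENNReal Topology

/-!
Apply the hypothesis to the truncations of `σ` at `T` and let `T → ∞`: the reward accumulated up to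
a time `t` is at most a multiple of `t`, so `E[σ] < ∞` lets dominated convergence give
`E[∫₀^σ e^{−α_s} (f(X_s) − d) ds] ≤ γ_r`. Near-optimality bounds `E[∫₀^σ e^{−α_s} f(X_s) ds]` from
below by `−2‖g‖ − ε`, because the discounted terminal reward has expectation at most `‖g‖`.
Subtracting leaves `−d` times the expected discounted duration.
-/

section JointMeasurability

theorem stronglyMeasurable_uncurry_of_isStronglyProgressive {ι Ω E : Type*} [LinearOrder ι]
    [Nonempty ι] [TopologicalSpace ι] [OrderClosedTopology ι] [SecondCountableTopology ι]
    [(atTop : Filter ι).IsCountablyGenerated] [MeasurableSpace ι] [OpensMeasurableSpace ι]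
    {m : MeasurableSpace Ω} {𝓕 : Filtration ι m} [TopologicalSpace E]
    [TopologicalSpace.PseudoMetrizableSpace E] {X : ι → Ω → E} (hX : IsStronglyProgressive 𝓕 X) :
    StronglyMeasurable (Function.uncurry X) := by
  have stopped (i : ι) : StronglyMeasurable fun p : ι × Ω => X (min p.1 i) p.2 := by
    have restricted : StronglyMeasurable fun p : Iic i × Ω => X p.1 p.2 :=
      (hX i).mono (sup_le_sup le_rfl (MeasurableSpace.comap_mono (𝓕.le i)))
    have truncation : Measurable fun p : ι × Ω =>
        ((⟨min p.1 i, min_le_right _ _⟩ : Iic i), p.2) :=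
      (measurable_fst.min measurable_const).subtype_mk.prodMk measurable_snd
    exact restricted.comp_measurable truncation
  refine stronglyMeasurable_of_tendsto atTop stopped (tendsto_pi_nhds.2 fun p => ?_)
  refine tendsto_const_nhds.congr' ?_
  filter_upwards [eventually_ge_atTop p.1] with i hi
  rw [min_eq_left hi, Function.uncurry]

theorem stronglyMeasurable_intervalIntegral_s12 {A G : Type*} [MeasurableSpace A]
    [NormedAddCommGroup G] [NormedSpace ℝ G] {μ : Measure ℝ} [SFinite μ] {H : ℝ → A → G}
    (hH : StronglyMeasurable (Function.uncurry H)) {a b : A → ℝ} (ha : Measurable a)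
    (hb : Measurable b) : StronglyMeasurable fun x => ∫ s in a x..b x, H s x ∂μ := by
  have setIntegral_Ioc {u v : A → ℝ} (hu : Measurable u) (hv : Measurable v) :
      StronglyMeasurable fun x => ∫ s in Ioc (u x) (v x), H s x ∂μ := by
    have region : MeasurableSet {q : A × ℝ | q.2 ∈ Ioc (u q.1) (v q.1)} :=
      (measurableSet_lt (hu.comp measurable_fst) measurable_snd).inter
        (measurableSet_le measurable_snd (hv.comp measurable_fst))
    simp only [← integral_indicator measurableSet_Ioc]
    exact ((hH.comp_measurable measurable_swap).indicator region).integral_prod_right'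
  exact (setIntegral_Ioc ha hb).sub (setIntegral_Ioc hb ha)

theorem stronglyMeasurable_uncurry_intervalIntegral {A G : Type*} [MeasurableSpace A]
    [NormedAddCommGroup G] [NormedSpace ℝ G] {μ : Measure ℝ} [SFinite μ] {H : ℝ → A → G}
    (hH : StronglyMeasurable (Function.uncurry H)) (a : ℝ) :
    StronglyMeasurable (Function.uncurry fun t x => ∫ s in a..t, H s x ∂μ) :=
  stronglyMeasurable_intervalIntegral_s12 (H := fun s (p : ℝ × A) => H s p.2)
    (hH.comp_measurable (measurable_fst.prodMk measurable_snd.snd)) measurable_const measurable_fst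

end JointMeasurability

section RandomHorizon

variable {Ω G : Type*} [MeasurableSpace Ω] {P : Measure Ω} [NormedAddCommGroup G]
  {H K : ℝ → Ω → G} {σ : Ω → ℝ} {C D : ℝ}

theorem intervalIntegrable_zero_of_norm_le {h : ℝ → G} (hh : StronglyMeasurable h)
    (hC : ∀ s, 0 ≤ s → ‖h s‖ ≤ C) {t : ℝ} (ht : 0 ≤ t) : IntervalIntegrable h volume 0 t := by
  refine (intervalIntegrable_const (c := C)).mono_fun hh.aestronglyMeasurable ?_
  filter_upwards [ae_restrict_mem measurableSet_uIoc] with s hs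
  exact (hC s (uIoc_of_le ht ▸ hs).1.le).trans (le_abs_self C)

variable [NormedSpace ℝ G]

theorem aestronglyMeasurable_intervalIntegral_zero (hH : StronglyMeasurable (Function.uncurry H))
    (hσ : AEMeasurable σ P) : AEStronglyMeasurable (fun ω => ∫ s in (0 : ℝ)..σ ω, H s ω) P :=
  (stronglyMeasurable_uncurry_intervalIntegral hH 0).aestronglyMeasurable.comp_aemeasurable
    (hσ.prodMk aemeasurable_id)

theorem norm_intervalIntegral_zero_le {h : ℝ → G} (hC : ∀ s, 0 ≤ s → ‖h s‖ ≤ C) {t : ℝ}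
    (ht : 0 ≤ t) : ‖∫ s in (0 : ℝ)..t, h s‖ ≤ C * t := by
  have bound : ∀ s ∈ uIoc 0 t, ‖h s‖ ≤ C := fun s hs => hC s (uIoc_of_le ht ▸ hs).1.le
  simpa [abs_of_nonneg ht] using intervalIntegral.norm_integral_le_of_norm_le_const bound

theorem integrable_intervalIntegral_zero (hH : StronglyMeasurable (Function.uncurry H))
    (hC : ∀ s ω, 0 ≤ s → ‖H s ω‖ ≤ C) (hσ0 : ∀ ω, 0 ≤ σ ω) (hσ : Integrable σ P) :
    Integrable (fun ω => ∫ s in (0 : ℝ)..σ ω, H s ω) P :=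
  (hσ.const_mul C).mono' (aestronglyMeasurable_intervalIntegral_zero hH hσ.aemeasurable)
    (ae_of_all P fun ω => norm_intervalIntegral_zero_le (hC · ω) (hσ0 ω))

theorem tendsto_integral_intervalIntegral_min (hH : StronglyMeasurable (Function.uncurry H))
    (hC : ∀ s ω, 0 ≤ s → ‖H s ω‖ ≤ C) (hσ0 : ∀ ω, 0 ≤ σ ω) (hσ : Integrable σ P) :
    Tendsto (fun T => ∫ ω, (∫ s in (0 : ℝ)..min (σ ω) T, H s ω) ∂P) atTop
      (𝓝 (∫ ω, (∫ s in (0 : ℝ)..σ ω, H s ω) ∂P)) := by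
  refine tendsto_integral_filter_of_dominated_convergence (fun ω => C * σ ω)
    (.of_forall fun T => ?measurable) ?dominated (hσ.const_mul C) (ae_of_all P fun ω => ?pointwise)
  case measurable =>
    exact aestronglyMeasurable_intervalIntegral_zero hH (hσ.aemeasurable.min aemeasurable_const)
  case dominated =>
    filter_upwards [eventually_ge_atTop 0] with T hT
    refine ae_of_all P fun ω => ?_
    have C_nonneg : 0 ≤ C := (norm_nonneg _).trans (hC 0 ω le_rfl)
    calc ‖∫ s in (0 : ℝ)..min (σ ω) T, H s ω‖
        ≤ C * min (σ ω) T := norm_intervalIntegral_zero_le (hC · ω) (le_min (hσ0 ω) hT)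
      _ ≤ C * σ ω := by gcongr; exact min_le_left _ _
  case pointwise =>
    refine tendsto_const_nhds.congr' ?_
    filter_upwards [eventually_ge_atTop (σ ω)] with T hT
    rw [min_eq_left hT]

theorem integral_intervalIntegral_sub (hH : StronglyMeasurable (Function.uncurry H))
    (hK : StronglyMeasurable (Function.uncurry K)) (hC : ∀ s ω, 0 ≤ s → ‖H s ω‖ ≤ C)
    (hD : ∀ s ω, 0 ≤ s → ‖K s ω‖ ≤ D) (hσ0 : ∀ ω, 0 ≤ σ ω) (hσ : Integrable σ P) :
    ∫ ω, (∫ s in (0 : ℝ)..σ ω, (H s ω - K s ω)) ∂P =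
      (∫ ω, (∫ s in (0 : ℝ)..σ ω, H s ω) ∂P) - ∫ ω, (∫ s in (0 : ℝ)..σ ω, K s ω) ∂P := by
  rw [← integral_sub (integrable_intervalIntegral_zero hH hC hσ0 hσ)
    (integrable_intervalIntegral_zero hK hD hσ0 hσ)]
  congr! 2 with ω
  exact intervalIntegral.integral_sub
    (intervalIntegrable_zero_of_norm_le hH.of_uncurry_right (hC · ω) (hσ0 ω))
    (intervalIntegrable_zero_of_norm_le hK.of_uncurry_right (hD · ω) (hσ0 ω))

end RandomHorizon

section Discounting

theorem abs_exp_neg_mul_le {a y C : ℝ} (ha : 0 ≤ a) (hy : |y| ≤ C) :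
    |Real.exp (-a) * y| ≤ C := by
  have exp_le_one : Real.exp (-a) ≤ 1 := Real.exp_le_one_iff.2 (neg_nonpos.2 ha)
  calc |Real.exp (-a) * y| = Real.exp (-a) * |y| := by rw [abs_mul, Real.abs_exp]
    _ ≤ |y| := mul_le_of_le_one_left (abs_nonneg y) exp_le_one
    _ ≤ C := hy

variable {Ω : Type*} [MeasurableSpace Ω] {P : Measure Ω} {α Y : ℝ → Ω → ℝ} {σ : Ω → ℝ} {C : ℝ}

theorem integral_discounted_sub_const_le_of_forall_min
    (hα : Measurable (Function.uncurry α)) (hα0 : ∀ s ω, 0 ≤ s → 0 ≤ α s ω)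
    (hY : Measurable (Function.uncurry Y)) (hYC : ∀ s ω, 0 ≤ s → |Y s ω| ≤ C)
    (hσ0 : ∀ ω, 0 ≤ σ ω) (hσ : Integrable σ P) {d γ : ℝ}
    (hγ : ∀ T, 0 ≤ T →
      ∫ ω, (∫ s in (0 : ℝ)..min (σ ω) T, Real.exp (-α s ω) * (Y s ω - d)) ∂P ≤ γ) :
    (∫ ω, (∫ s in (0 : ℝ)..σ ω, Real.exp (-α s ω) * Y s ω) ∂P)
      - (∫ ω, (∫ s in (0 : ℝ)..σ ω, Real.exp (-α s ω)) ∂P) * d ≤ γ := by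
  have discounted {Z : ℝ → Ω → ℝ} (hZ : Measurable (Function.uncurry Z)) :
      StronglyMeasurable (Function.uncurry fun s ω => Real.exp (-α s ω) * Z s ω) :=
    (hα.neg.exp.mul hZ).stronglyMeasurable
  have bound : ∀ s ω, 0 ≤ s → |Y s ω - d| ≤ C + |d| := fun s ω hs =>
    (abs_sub _ _).trans (add_le_add_left (hYC s ω hs) _)
  have limit := tendsto_integral_intervalIntegral_min
    (discounted (Z := fun s ω => Y s ω - d) (hY.sub_const d))
    (fun s ω hs => abs_exp_neg_mul_le (hα0 s ω hs) (bound s ω hs)) hσ0 hσ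
  calc (∫ ω, (∫ s in (0 : ℝ)..σ ω, Real.exp (-α s ω) * Y s ω) ∂P)
      - (∫ ω, (∫ s in (0 : ℝ)..σ ω, Real.exp (-α s ω)) ∂P) * d
      = ∫ ω, (∫ s in (0 : ℝ)..σ ω, Real.exp (-α s ω) * (Y s ω - d)) ∂P := by
        simp only [mul_sub]
        rw [integral_intervalIntegral_sub (discounted hY) (discounted measurable_const)
          (fun s ω hs => abs_exp_neg_mul_le (hα0 s ω hs) (hYC s ω hs))
          (fun s ω hs => abs_exp_neg_mul_le (hα0 s ω hs) le_rfl) hσ0 hσ]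
        simp only [intervalIntegral.integral_mul_const, integral_mul_const]
    _ ≤ γ := le_of_tendsto limit ((eventually_ge_atTop 0).mono hγ)

theorem integrable_discounted_terminal [IsFiniteMeasure P]
    (hα : Measurable (Function.uncurry α)) (hα0 : ∀ s ω, 0 ≤ s → 0 ≤ α s ω)
    (hY : Measurable (Function.uncurry Y)) (hYC : ∀ s ω, 0 ≤ s → |Y s ω| ≤ C)
    (hσ0 : ∀ ω, 0 ≤ σ ω) (hσ : AEMeasurable σ P) :
    Integrable (fun ω => Real.exp (-α (σ ω) ω) * Y (σ ω) ω) P := by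
  have atσ : AEMeasurable (fun ω => (σ ω, ω)) P := hσ.prodMk aemeasurable_id
  exact .of_bound ((hα.neg.exp.mul hY).comp_aemeasurable atσ).aestronglyMeasurable C
    (ae_of_all P fun ω => abs_exp_neg_mul_le (hα0 _ ω (hσ0 ω)) (hYC _ ω (hσ0 ω)))

end Discounting

theorem stmt12_general {Ω : Type*} [MeasurableSpace Ω] (P : Measure Ω) [IsProbabilityMeasure P]
    {E : Type*} [MeasurableSpace E] (X : ℝ → Ω → E) (hX : Measurable (Function.uncurry X))
    (f g : E → ℝ) (hf : Measurable f) (hg : Measurable g)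
    (Cf Cg : ℝ) (hfb : ∀ x, |f x| ≤ Cf) (hgb : ∀ x, |g x| ≤ Cg)
    (α : ℝ → Ω → ℝ) (hα : Measurable (Function.uncurry α)) (hα0 : ∀ s ω, 0 ≤ s → 0 ≤ α s ω)
    (d γ : ℝ) (hd : d < 0) (σ : Ω → ℝ) (hσ0 : ∀ ω, 0 ≤ σ ω) (hσ : Integrable σ P)
    (hγ : ∀ T, 0 ≤ T →
      ∫ ω, (∫ s in (0 : ℝ)..min (σ ω) T, Real.exp (-α s ω) * (f (X s ω) - d)) ∂P ≤ γ)
    (ε : ℝ)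
    (hval : -Cg - ε ≤ ∫ ω, ((∫ s in (0 : ℝ)..σ ω, Real.exp (-α s ω) * f (X s ω))
      + Real.exp (-α (σ ω) ω) * g (X (σ ω) ω)) ∂P) :
    ∫ ω, (∫ s in (0 : ℝ)..σ ω, Real.exp (-α s ω)) ∂P ≤ (γ + 2 * Cg + ε) / (-d) := by
  have hfX : Measurable (Function.uncurry fun s ω => f (X s ω)) := hf.comp hX
  have hgX : Measurable (Function.uncurry fun s ω => g (X s ω)) := hg.comp hX
  have running_integrable : Integrable
      (fun ω => ∫ s in (0 : ℝ)..σ ω, Real.exp (-α s ω) * f (X s ω)) P :=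
    integrable_intervalIntegral_zero (hα.neg.exp.mul hfX).stronglyMeasurable
      (fun s ω hs => abs_exp_neg_mul_le (hα0 s ω hs) (hfb _)) hσ0 hσ
  have terminal_integrable := integrable_discounted_terminal hα hα0 hgX
    (fun _ _ _ => hgb _) hσ0 hσ.aemeasurable
  have terminal_le : ∫ ω, Real.exp (-α (σ ω) ω) * g (X (σ ω) ω) ∂P ≤ Cg := by
    simpa using integral_mono terminal_integrable (integrable_const Cg)
      fun ω => (le_abs_self _).trans (abs_exp_neg_mul_le (hα0 _ ω (hσ0 ω)) (hgb _))
  have excess_le := integral_discounted_sub_const_le_of_forall_min hα hα0 hfX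
    (fun _ _ _ => hfb _) hσ0 hσ hγ
  rw [integral_add running_integrable terminal_integrable] at hval
  rw [le_div_iff₀ (neg_pos.2 hd)]
  linarith

/-- discounted version of the bound on near-optimal stopping times:
`E[∫₀^σ e^{−α_s} ds] ≤ (γ_r + 2‖g‖ + ε)/(−d)`, where `α_t = ∫₀^t r(X_u) du`. -/
theorem stmt12
    {Ω : Type*} {m0 : MeasurableSpace Ω} (P : Measure Ω) [IsProbabilityMeasure P]
    (𝓕 : Filtration ℝ m0)
    {E : Type*} [MetricSpace E] [MeasurableSpace E] [BorelSpace E]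
    (X : ℝ → Ω → E) (hX : ProgMeasurable 𝓕 X)
    (f g : E → ℝ) (hf : Measurable f) (hg : Measurable g)
    (Cf Cg : ℝ) (hfb : ∀ x, |f x| ≤ Cf) (hgb : ∀ x, |g x| ≤ Cg)
    (r : E → ℝ) (hr : Measurable r) (Cr : ℝ) (hrb : ∀ x, |r x| ≤ Cr)
    (hr0 : ∀ x, 0 ≤ r x)
    (d γr : ℝ) (hd : d < 0)
    (hγ : ∀ τ : Ω → ℝ, IsStoppingTime 𝓕 (fun ω => ((τ ω : ℝ) : WithTop ℝ)) → (∀ ω, 0 ≤ τ ω) → ∀ T : ℝ, 0 ≤ T →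
      ∫ ω, (∫ s in (0:ℝ)..(min (τ ω) T),
        Real.exp (-(∫ u in (0:ℝ)..s, r (X u ω))) * (f (X s ω) - d)) ∂P ≤ γr)
    (σ : Ω → ℝ) (hσ : IsStoppingTime 𝓕 (fun ω => ((σ ω : ℝ) : WithTop ℝ))) (hσ0 : ∀ ω, 0 ≤ σ ω)
    (hσint : Integrable σ P)
    (ε : ℝ) (hε : 0 ≤ ε)
    (hval : -Cg - ε ≤ ∫ ω,
      ((∫ s in (0:ℝ)..(σ ω), Real.exp (-(∫ u in (0:ℝ)..s, r (X u ω))) * f (X s ω))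
        + Real.exp (-(∫ u in (0:ℝ)..(σ ω), r (X u ω))) * g (X (σ ω) ω)) ∂P) :
    ∫ ω, (∫ s in (0:ℝ)..(σ ω), Real.exp (-(∫ u in (0:ℝ)..s, r (X u ω)))) ∂P
      ≤ (γr + 2 * Cg + ε) / (-d) := by
  have hXm := (stronglyMeasurable_uncurry_of_isStronglyProgressive hX).measurable
  have hrX : Measurable (Function.uncurry fun u ω => r (X u ω)) := hr.comp hXm
  exact stmt12_general P X hXm f g hf hg Cf Cg hfb hgb _
    (stronglyMeasurable_uncurry_intervalIntegral hrX.stronglyMeasurable 0).measurable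
    (fun _ _ hs => intervalIntegral.integral_nonneg hs fun _ _ => hr0 _)
    d γr hd σ hσ0 hσint (hγ σ hσ hσ0) ε hval
end

section
/- Let w, g : E → ℝ be measurable with g ≤ w pointwise, set Z_t := ∫₀^t e^{−α_s} f(X_s) ds + e^{−α_t} w(X_t), and assume each Z_t is integrable, (Z_t) is adapted, satisfies the optional-sampling supermartingale property, and Z_0 = w₀ a.s. for a constant w₀ ∈ ℝ. Let ε > 0 and η > 0, let σ be a bounded stopping time with E[∫₀^σ e^{−α_s} f(X_s) ds + e^{−α_σ} g(X_σ)] ≥ w₀ − η, and let τ_ε be a stopping time such that for a.e. ω and every t < τ_ε(ω) one has g(X_t(ω)) < w(X_t(ω)) − ε. Then E[1_{σ < τ_ε} e^{−α_σ}] ≤ η/ε. -/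
open MeasureTheory Filter Set
open scoped ENNReal Topology Classical

/-! Write `Z` for the discounted payoff process with terminal reward `w` and `G` for the one with
terminal reward `g`. Then `Z_σ - G_σ = e^{-α_σ} (w - g)(X_σ)` is nonnegative, and at least
`ε e^{-α_σ}` on `{σ < τ_ε}`. Since `E[Z_σ] ≤ w₀ ≤ E[G_σ] + η`, Markov's inequality gives the bound.

Only the deterministic-time values of `Z` are assumed integrable, so `E[Z_σ]` could be a junk
integral. Let `T` bound `σ` and stop at `σ` when `Z_σ` is at most `n` up to a constant, and at `T`
otherwise: this is a stopping time at which `Z` is integrable. Since `Z` is bounded below by the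
bounded process `G`, letting `n → ∞` gives both the integrability of `Z_σ` and `E[Z_σ] ≤ w₀`. -/

section Measurability

lemma measurable_of_measurableSet_le_ofReal {Ω : Type*} [MeasurableSpace Ω] {τ : Ω → ℝ≥0∞}
    (hτ : ∀ t : ℝ, MeasurableSet {ω | τ ω ≤ ENNReal.ofReal t}) : Measurable τ := by
  refine measurable_of_Iic fun a => ?_
  obtain rfl | ha := eq_or_ne a ∞
  · simp
  · have hpre : τ ⁻¹' Iic a = {ω | τ ω ≤ ENNReal.ofReal a.toReal} := by
      rw [ENNReal.ofReal_toReal ha]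
      rfl
    exact hpre ▸ hτ a.toReal

-- The substitution `u = t v` moves the variable endpoint into the integrand.
lemma measurable_intervalIntegral_zero {Ω : Type*} [MeasurableSpace Ω] {h : ℝ × Ω → ℝ}
    (hh : Measurable h) : Measurable fun p : ℝ × Ω => ∫ u in (0 : ℝ)..p.1, h (u, p.2) := by
  have rescale (p : ℝ × Ω) :
      ∫ u in (0 : ℝ)..p.1, h (u, p.2) = p.1 * ∫ v in Ioc (0 : ℝ) 1, h (p.1 * v, p.2) := by
    rw [← intervalIntegral.integral_of_le zero_le_one,
      intervalIntegral.mul_integral_comp_mul_left (f := fun u => h (u, p.2)), mul_zero, mul_one]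
  have hint : Measurable fun p : ℝ × Ω => ∫ v in Ioc (0 : ℝ) 1, h (p.1 * v, p.2) :=
    (StronglyMeasurable.integral_prod_right (f := fun (p : ℝ × Ω) v => h (p.1 * v, p.2))
      (Measurable.stronglyMeasurable (by fun_prop))).measurable
  simp_rw [rescale]
  exact measurable_fst.mul hint

lemma measurable_uncurry_min_of_isStronglyProgressive {Ω E : Type*} {m0 : MeasurableSpace Ω}
    {𝓕 : Filtration ℝ m0} [TopologicalSpace E] [TopologicalSpace.PseudoMetrizableSpace E]
    [MeasurableSpace E] [BorelSpace E] {X : ℝ → Ω → E} (hX : IsStronglyProgressive 𝓕 X) (t : ℝ) :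
    Measurable[Prod.instMeasurableSpace (m₂ := 𝓕 t)] fun p : ℝ × Ω => X (min p.1 t) p.2 := by
  let _ : MeasurableSpace Ω := 𝓕 t
  have hclip : Measurable fun p : ℝ × Ω =>
      ((⟨min p.1 t, mem_Iic.2 (min_le_right _ _)⟩ : Iic t), p.2) :=
    ((measurable_fst.min measurable_const).subtype_mk).prodMk measurable_snd
  exact (hX t).measurable.comp hclip

end Measurability

section OptionalSampling

variable {Ω : Type*} {m0 : MeasurableSpace Ω}

lemma integral_le_of_condExp_le {P : Measure Ω} [IsProbabilityMeasure P] {m : MeasurableSpace Ω}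
    (hm : m ≤ m0) {Y : Ω → ℝ} {c : ℝ} (h : ∀ᵐ ω ∂P, (P[Y | m]) ω ≤ c) : ∫ ω, Y ω ∂P ≤ c :=
  calc ∫ ω, Y ω ∂P = ∫ ω, (P[Y | m]) ω ∂P := (integral_condExp hm).symm
    _ ≤ ∫ _, c ∂P := integral_mono_ae integrable_condExp (integrable_const c) h
    _ = c := by simp

lemma isStoppingTime_piecewise {ι : Type*} [Preorder ι] {𝓕 : Filtration ι m0}
    {σ τ : Ω → WithTop ι} (hσ : IsStoppingTime 𝓕 σ) (hτ : IsStoppingTime 𝓕 τ) (hστ : σ ≤ τ)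
    {A : Set Ω} (hA : MeasurableSet[hσ.measurableSpace] A) :
    IsStoppingTime 𝓕 (A.piecewise σ τ) := by
  intro t
  have hsplit : {ω | A.piecewise σ τ ω ≤ t}
      = (A ∩ {ω | σ ω ≤ t}) ∪ ((Aᶜ ∩ {ω | σ ω ≤ t}) ∩ {ω | τ ω ≤ t}) := by
    ext ω
    by_cases hω : ω ∈ A
    · simp [hω]
    · simpa [hω] using (hστ ω).trans
  rw [hsplit]
  exact (hA.2 t).union ((hA.compl.2 t).inter (hτ t))

lemma integrableOn_setOf_le_of_nonneg {μ : Measure Ω} [IsFiniteMeasure μ] {Y : Ω → ℝ}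
    (hY : Measurable Y) (hY0 : 0 ≤ Y) (a : ℝ) : IntegrableOn Y {ω | Y ω ≤ a} μ :=
  Measure.integrableOn_of_bounded (measure_ne_top μ _) hY.aestronglyMeasurable <|
    (ae_restrict_mem (measurableSet_le hY measurable_const)).mono fun ω hω => by
      rwa [Real.norm_of_nonneg (hY0 ω)]

lemma integrable_and_integral_le_of_integral_piecewise_le {μ : Measure Ω} [IsFiniteMeasure μ]
    {Y V : Ω → ℝ} {c : ℝ} (hY : Measurable Y) (hY0 : 0 ≤ Y) (hV : Integrable V μ) (hV0 : 0 ≤ V)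
    (hc : ∀ n : ℕ, ∫ ω, {ω | Y ω ≤ n}.piecewise Y V ω ∂μ ≤ c) :
    Integrable Y μ ∧ ∫ ω, Y ω ∂μ ≤ c := by
  have hcover : AECover μ atTop fun n : ℕ => {ω | Y ω ≤ n} :=
    { ae_eventually_mem := Eventually.of_forall fun ω =>
        tendsto_natCast_atTop_atTop.eventually_ge_atTop (Y ω)
      measurableSet := fun _ => measurableSet_le hY measurable_const }
  have hYn (n : ℕ) : IntegrableOn Y {ω | Y ω ≤ n} μ := integrableOn_setOf_le_of_nonneg hY hY0 n
  have hle (n : ℕ) : ∫ ω in {ω | Y ω ≤ n}, Y ω ∂μ ≤ c := by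
    have hn := hc n
    rw [integral_piecewise (hcover.measurableSet n) (hYn n) hV.integrableOn] at hn
    linarith [integral_nonneg (μ := μ.restrict {ω | Y ω ≤ n}ᶜ) hV0]
  have hYi : Integrable Y μ := hcover.integrable_of_integral_bounded_of_nonneg_ae c hYn
    (Eventually.of_forall hY0) (Eventually.of_forall hle)
  exact ⟨hYi, le_of_tendsto' (hcover.integral_tendsto_of_countably_generated hYi) hle⟩

lemma integrable_and_integral_le_of_forall_isStoppingTime {P : Measure Ω} [IsProbabilityMeasure P]
    {𝓕 : Filtration ℝ m0} {Z : ℝ → Ω → ℝ} (hZ : IsStronglyProgressive 𝓕 Z) {σ : Ω → ℝ}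
    (hσ : IsStoppingTime 𝓕 fun ω => (σ ω : WithTop ℝ)) {T : ℝ} (hσT : ∀ ω, σ ω ≤ T)
    (hZT : Integrable (Z T) P) {C : ℝ} (hσC : ∀ ω, -C ≤ Z (σ ω) ω) (hTC : ∀ ω, -C ≤ Z T ω)
    {c : ℝ} (hc : ∀ ρ : Ω → ℝ, IsStoppingTime 𝓕 (fun ω => (ρ ω : WithTop ℝ)) →
      (∀ ω, σ ω ≤ ρ ω) → (∀ ω, ρ ω ≤ T) → ∫ ω, Z (ρ ω) ω ∂P ≤ c) :
    Integrable (fun ω => Z (σ ω) ω) P ∧ ∫ ω, Z (σ ω) ω ∂P ≤ c := by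
  set Y : Ω → ℝ := fun ω => Z (σ ω) ω + C
  set V : Ω → ℝ := fun ω => Z T ω + C
  have hYσ : Measurable[hσ.measurableSpace] Y := (measurable_stoppedValue hZ hσ).add_const C
  have hY : Measurable Y := hYσ.mono hσ.measurableSpace_le le_rfl
  have hY0 : 0 ≤ Y := fun ω => neg_le_iff_add_nonneg.1 (hσC ω)
  have hV : Integrable V P := hZT.add (integrable_const C)
  have hV0 : 0 ≤ V := fun ω => neg_le_iff_add_nonneg.1 (hTC ω)
  have hpiece (n : ℕ) : ∫ ω, {ω | Y ω ≤ n}.piecewise Y V ω ∂P ≤ c + C := by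
    set ρ : Ω → ℝ := {ω | Y ω ≤ n}.piecewise σ fun _ => T
    have hρ : IsStoppingTime 𝓕 fun ω => (ρ ω : WithTop ℝ) := by
      convert isStoppingTime_piecewise hσ (isStoppingTime_const 𝓕 T)
        (fun ω => WithTop.coe_le_coe.2 (hσT ω)) (hYσ measurableSet_Iic : _) using 1
      exact funext fun ω => apply_piecewise _ _ _ fun _ => WithTop.some
    have hρT (ω : Ω) : σ ω ≤ ρ ω ∧ ρ ω ≤ T := by
      by_cases hω : Y ω ≤ n <;> simp [ρ, hω, hσT ω]
    have hpw : {ω | Y ω ≤ n}.piecewise Y V = fun ω => Z (ρ ω) ω + C := by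
      ext ω
      by_cases hω : Y ω ≤ n <;> simp [ρ, Y, V, hω]
    have hint : Integrable (fun ω => Z (ρ ω) ω + C) P := hpw ▸
      Integrable.piecewise (measurableSet_le hY measurable_const)
        (integrableOn_setOf_le_of_nonneg hY hY0 n) hV.integrableOn
    rw [hpw, integral_add (integrable_add_const_iff.1 hint) (integrable_const C)]
    simpa using hc ρ hρ (fun ω => (hρT ω).1) fun ω => (hρT ω).2
  obtain ⟨hYi, hYc⟩ := integrable_and_integral_le_of_integral_piecewise_le hY hY0 hV hV0 hpiece
  have hZi : Integrable (fun ω => Z (σ ω) ω) P := integrable_add_const_iff.1 hYi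
  refine ⟨hZi, ?_⟩
  rw [integral_add hZi (integrable_const C)] at hYc
  simpa using hYc

end OptionalSampling

section DiscountedPayoff

variable {Ω E : Type*} {X : ℝ → Ω → E} {r f w : E → ℝ}

/-- The discount factor `e^{-α_t}`, where `α_t = ∫₀ᵗ r(X_u) du`. -/
noncomputable def discountFactor (X : ℝ → Ω → E) (r : E → ℝ) (t : ℝ) (ω : Ω) : ℝ :=
  Real.exp (-(∫ u in (0 : ℝ)..t, r (X u ω)))

/-- The discounted payoff `∫₀ᵗ e^{-α_s} f(X_s) ds + e^{-α_t} w(X_t)` of stopping at time `t`, with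
running reward `f` and terminal reward `w`. -/
noncomputable def discountedPayoff (X : ℝ → Ω → E) (r f w : E → ℝ) (t : ℝ) (ω : Ω) : ℝ :=
  (∫ s in (0 : ℝ)..t, discountFactor X r s ω * f (X s ω)) + discountFactor X r t ω * w (X t ω)

lemma discountFactor_pos (t : ℝ) (ω : Ω) : 0 < discountFactor X r t ω := Real.exp_pos _

lemma discountFactor_le_exp {C T t : ℝ} {ω : Ω} (hr : ∀ x, |r x| ≤ C) (ht0 : 0 ≤ t)
    (htT : t ≤ T) : discountFactor X r t ω ≤ Real.exp (C * T) := by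
  have hα : ‖∫ u in (0 : ℝ)..t, r (X u ω)‖ ≤ C * |t - 0| :=
    intervalIntegral.norm_integral_le_of_norm_le_const fun u _ => hr (X u ω)
  rw [sub_zero, abs_of_nonneg ht0] at hα
  have hC : 0 ≤ C := (abs_nonneg _).trans (hr (X 0 ω))
  exact Real.exp_le_exp.2 <| ((neg_le_abs _).trans hα).trans (mul_le_mul_of_nonneg_left htT hC)

lemma discountedPayoff_sub_discountedPayoff (g : E → ℝ) (t : ℝ) (ω : Ω) :
    discountedPayoff X r f w t ω - discountedPayoff X r f g t ω
      = discountFactor X r t ω * (w (X t ω) - g (X t ω)) := by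
  unfold discountedPayoff
  ring

lemma discountedPayoff_mono {g : E → ℝ} (hgw : ∀ x, g x ≤ w x) (t : ℝ) (ω : Ω) :
    discountedPayoff X r f g t ω ≤ discountedPayoff X r f w t ω := by
  rw [← sub_nonneg, discountedPayoff_sub_discountedPayoff]
  exact mul_nonneg (discountFactor_pos t ω).le (sub_nonneg.2 (hgw _))

lemma abs_discountedPayoff_le {Cf Cr Cw T t : ℝ} {ω : Ω} (hf : ∀ x, |f x| ≤ Cf)
    (hr : ∀ x, |r x| ≤ Cr) (hw : ∀ x, |w x| ≤ Cw) (ht0 : 0 ≤ t) (htT : t ≤ T) :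
    |discountedPayoff X r f w t ω| ≤ Real.exp (Cr * T) * (Cf * T + Cw) := by
  have bound {h : E → ℝ} {Ch s : ℝ} (hh : ∀ x, |h x| ≤ Ch) (hs0 : 0 ≤ s) (hsT : s ≤ T) :
      |discountFactor X r s ω * h (X s ω)| ≤ Real.exp (Cr * T) * Ch := by
    rw [abs_mul, abs_of_pos (discountFactor_pos s ω)]
    exact mul_le_mul (discountFactor_le_exp hr hs0 hsT) (hh _) (abs_nonneg _) (Real.exp_pos _).le
  have hrunning : |∫ s in (0 : ℝ)..t, discountFactor X r s ω * f (X s ω)|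
      ≤ Real.exp (Cr * T) * Cf * |t - 0| := by
    rw [← Real.norm_eq_abs]
    refine intervalIntegral.norm_integral_le_of_norm_le_const fun s hs => ?_
    rw [uIoc_of_le ht0] at hs
    exact bound hf hs.1.le (hs.2.trans htT)
  have hCf : 0 ≤ Cf := (abs_nonneg _).trans (hf (X 0 ω))
  calc |discountedPayoff X r f w t ω|
      ≤ Real.exp (Cr * T) * Cf * |t - 0| + Real.exp (Cr * T) * Cw :=
        (abs_add_le _ _).trans (add_le_add hrunning (bound hw ht0 htT))
    _ = Real.exp (Cr * T) * (Cf * t + Cw) := by rw [sub_zero, abs_of_nonneg ht0]; ring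
    _ ≤ Real.exp (Cr * T) * (Cf * T + Cw) := by gcongr

lemma discountedPayoff_congr {Y : ℝ → Ω → E} {t : ℝ} {ω : Ω} (ht : 0 ≤ t)
    (hXY : ∀ u ≤ t, X u ω = Y u ω) :
    discountedPayoff X r f w t ω = discountedPayoff Y r f w t ω := by
  have hdiscount {s : ℝ} (hs0 : 0 ≤ s) (hst : s ≤ t) :
      discountFactor X r s ω = discountFactor Y r s ω := by
    unfold discountFactor
    refine congrArg (fun α => Real.exp (-α)) (intervalIntegral.integral_congr fun u hu => ?_)
    rw [uIcc_of_le hs0] at hu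
    exact congrArg r (hXY u (hu.2.trans hst))
  unfold discountedPayoff
  rw [hdiscount ht le_rfl, hXY t le_rfl]
  congr 1
  refine intervalIntegral.integral_congr fun s hs => ?_
  rw [uIcc_of_le ht] at hs
  exact congrArg₂ (· * f ·) (hdiscount hs.1 hs.2) (hXY s hs.2)

variable [MeasurableSpace E]

lemma measurable_uncurry_discountedPayoff [MeasurableSpace Ω]
    (hX : Measurable fun p : ℝ × Ω => X p.1 p.2) (hr : Measurable r) (hf : Measurable f)
    (hw : Measurable w) : Measurable fun p : ℝ × Ω => discountedPayoff X r f w p.1 p.2 := by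
  have hα : Measurable fun p : ℝ × Ω => ∫ u in (0 : ℝ)..p.1, r (X u p.2) :=
    measurable_intervalIntegral_zero (hr.comp hX)
  have hdiscount : Measurable fun p : ℝ × Ω => discountFactor X r p.1 p.2 := hα.neg.exp
  exact (measurable_intervalIntegral_zero (hdiscount.mul (hf.comp hX))).add
    (hdiscount.mul (hw.comp hX))

-- The payoff is set to `0` at negative times, where the integrals from `t` to `0` would look into
-- the future of `t`.
lemma isStronglyProgressive_indicator_discountedPayoff {m0 : MeasurableSpace Ω}
    {𝓕 : Filtration ℝ m0} [TopologicalSpace E] [TopologicalSpace.PseudoMetrizableSpace E]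
    [BorelSpace E] (hX : IsStronglyProgressive 𝓕 X) (hr : Measurable r) (hf : Measurable f)
    (hw : Measurable w) :
    IsStronglyProgressive 𝓕 ((Ici (0 : ℝ)).indicator (discountedPayoff X r f w)) := by
  intro t
  let _ : MeasurableSpace Ω := 𝓕 t
  have hclipped : Measurable fun p : Iic t × Ω =>
      discountedPayoff (fun u ω => X (min u t) ω) r f w p.1 p.2 :=
    (measurable_uncurry_discountedPayoff (measurable_uncurry_min_of_isStronglyProgressive hX t)
      hr hf hw).comp (by fun_prop : Measurable fun p : Iic t × Ω => ((p.1 : ℝ), p.2))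
  have hnonneg : MeasurableSet {p : Iic t × Ω | 0 ≤ (p.1 : ℝ)} :=
    measurableSet_le measurable_const (by fun_prop)
  suffices heq : (fun p : Iic t × Ω => (Ici (0 : ℝ)).indicator (discountedPayoff X r f w) p.1 p.2)
      = {p : Iic t × Ω | 0 ≤ (p.1 : ℝ)}.indicator fun p =>
        discountedPayoff (fun u ω => X (min u t) ω) r f w p.1 p.2 from
    heq ▸ (hclipped.indicator hnonneg).stronglyMeasurable
  funext ⟨s, ω⟩
  by_cases hs : 0 ≤ (s : ℝ)
  · simpa [indicator, hs] using discountedPayoff_congr hs fun u hu => by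
      rw [min_eq_left (hu.trans s.2)]
  · simp [indicator, hs]

end DiscountedPayoff

section StoppedPayoff

variable {Ω E : Type*} {m0 : MeasurableSpace Ω} {P : Measure Ω}
  {𝓕 : Filtration ℝ m0} [TopologicalSpace E] [TopologicalSpace.PseudoMetrizableSpace E]
  [MeasurableSpace E] [BorelSpace E] {X : ℝ → Ω → E} {f g r w : E → ℝ} {Cf Cg Cr T : ℝ}
  {σ : Ω → ℝ}

lemma integrable_discountedPayoff_of_bounded [IsFiniteMeasure P] (hX : IsStronglyProgressive 𝓕 X)
    (hf : Measurable f) (hg : Measurable g) (hr : Measurable r) (hfb : ∀ x, |f x| ≤ Cf)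
    (hgb : ∀ x, |g x| ≤ Cg) (hrb : ∀ x, |r x| ≤ Cr)
    (hσ : IsStoppingTime 𝓕 fun ω => (σ ω : WithTop ℝ)) (hσ0 : ∀ ω, 0 ≤ σ ω)
    (hσT : ∀ ω, σ ω ≤ T) : Integrable (fun ω => discountedPayoff X r f g (σ ω) ω) P := by
  have hmeas : Measurable fun ω => discountedPayoff X r f g (σ ω) ω := by
    have hstopped :
        Measurable fun ω => (Ici (0 : ℝ)).indicator (discountedPayoff X r f g) (σ ω) ω :=
      (measurable_stoppedValue (isStronglyProgressive_indicator_discountedPayoff hX hr hf hg)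
        hσ).mono hσ.measurableSpace_le le_rfl
    simpa only [indicator_of_mem (mem_Ici.2 (hσ0 _))] using hstopped
  exact .of_bound hmeas.aestronglyMeasurable _
    (Eventually.of_forall fun ω => abs_discountedPayoff_le hfb hrb hgb (hσ0 ω) (hσT ω))

variable [IsProbabilityMeasure P]

lemma integrable_discountedPayoff_and_integral_le (hX : IsStronglyProgressive 𝓕 X)
    (hf : Measurable f) (hr : Measurable r) (hw : Measurable w) (hfb : ∀ x, |f x| ≤ Cf)
    (hgb : ∀ x, |g x| ≤ Cg) (hrb : ∀ x, |r x| ≤ Cr) (hgw : ∀ x, g x ≤ w x)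
    (hσ : IsStoppingTime 𝓕 fun ω => (σ ω : WithTop ℝ)) (hσ0 : ∀ ω, 0 ≤ σ ω)
    (hσT : ∀ ω, σ ω ≤ T) (hZT : Integrable (discountedPayoff X r f w T) P) {w₀ : ℝ}
    (hZ : ∀ ρ : Ω → ℝ, IsStoppingTime 𝓕 (fun ω => (ρ ω : WithTop ℝ)) → (∀ ω, σ ω ≤ ρ ω) →
      (∀ ω, ρ ω ≤ T) → ∫ ω, discountedPayoff X r f w (ρ ω) ω ∂P ≤ w₀) :
    Integrable (fun ω => discountedPayoff X r f w (σ ω) ω) P ∧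
      ∫ ω, discountedPayoff X r f w (σ ω) ω ∂P ≤ w₀ := by
  set Z : ℝ → Ω → ℝ := (Ici (0 : ℝ)).indicator (discountedPayoff X r f w)
  have hZeq {t : ℝ} (ht : 0 ≤ t) : Z t = discountedPayoff X r f w t := indicator_of_mem ht _
  have hT0 : 0 ≤ T := by
    obtain ⟨ω⟩ := P.nonempty_of_neZero
    exact (hσ0 ω).trans (hσT ω)
  have hlower {t : ℝ} (ht0 : 0 ≤ t) (htT : t ≤ T) (ω : Ω) :
      -(Real.exp (Cr * T) * (Cf * T + Cg)) ≤ Z t ω :=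
    calc -(Real.exp (Cr * T) * (Cf * T + Cg))
        ≤ discountedPayoff X r f g t ω :=
          neg_le_of_abs_le (abs_discountedPayoff_le hfb hrb hgb ht0 htT)
      _ ≤ discountedPayoff X r f w t ω := discountedPayoff_mono hgw t ω
      _ = Z t ω := by rw [hZeq ht0]
  have hZ' (ρ : Ω → ℝ) (hρ : IsStoppingTime 𝓕 fun ω => (ρ ω : WithTop ℝ))
      (hσρ : ∀ ω, σ ω ≤ ρ ω) (hρT : ∀ ω, ρ ω ≤ T) : ∫ ω, Z (ρ ω) ω ∂P ≤ w₀ := by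
    simpa only [hZeq ((hσ0 _).trans (hσρ _))] using hZ ρ hρ hσρ hρT
  have hZT' : Integrable (Z T) P := by rwa [hZeq hT0]
  simpa only [Z, indicator_of_mem (mem_Ici.2 (hσ0 _))] using
    integrable_and_integral_le_of_forall_isStoppingTime
      (isStronglyProgressive_indicator_discountedPayoff hX hr hf hw) hσ hσT hZT'
      (fun ω => hlower (hσ0 ω) (hσT ω) ω) (hlower hT0 le_rfl) hZ'

lemma setIntegral_discountFactor_le (hX : IsStronglyProgressive 𝓕 X) (hf : Measurable f)
    (hg : Measurable g) (hr : Measurable r) (hw : Measurable w) (hfb : ∀ x, |f x| ≤ Cf)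
    (hgb : ∀ x, |g x| ≤ Cg) (hrb : ∀ x, |r x| ≤ Cr) (hgw : ∀ x, g x ≤ w x)
    (hσ : IsStoppingTime 𝓕 fun ω => (σ ω : WithTop ℝ)) (hσ0 : ∀ ω, 0 ≤ σ ω)
    (hσT : ∀ ω, σ ω ≤ T) (hZT : Integrable (discountedPayoff X r f w T) P) {w₀ ε η : ℝ}
    (hZ : ∀ ρ : Ω → ℝ, IsStoppingTime 𝓕 (fun ω => (ρ ω : WithTop ℝ)) → (∀ ω, σ ω ≤ ρ ω) →
      (∀ ω, ρ ω ≤ T) → ∫ ω, discountedPayoff X r f w (ρ ω) ω ∂P ≤ w₀)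
    (hσval : w₀ - η ≤ ∫ ω, discountedPayoff X r f g (σ ω) ω ∂P) (hε : 0 < ε)
    {A : Set Ω} (hA : MeasurableSet A)
    (hgap : ∀ᵐ ω ∂P, ω ∈ A → g (X (σ ω) ω) ≤ w (X (σ ω) ω) - ε) :
    ∫ ω in A, discountFactor X r (σ ω) ω ∂P ≤ η / ε := by
  set Z : Ω → ℝ := fun ω => discountedPayoff X r f w (σ ω) ω
  set G : Ω → ℝ := fun ω => discountedPayoff X r f g (σ ω) ω
  obtain ⟨hZi, hZw₀⟩ : Integrable Z P ∧ ∫ ω, Z ω ∂P ≤ w₀ :=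
    integrable_discountedPayoff_and_integral_le hX hf hr hw hfb hgb hrb hgw hσ hσ0 hσT hZT hZ
  have hGi : Integrable G P :=
    integrable_discountedPayoff_of_bounded hX hf hg hr hfb hgb hrb hσ hσ0 hσT
  have hdom : ∀ᵐ ω ∂P.restrict A, ε * discountFactor X r (σ ω) ω ≤ Z ω - G ω := by
    rw [ae_restrict_iff' hA]
    filter_upwards [hgap] with ω hω hωA
    calc ε * discountFactor X r (σ ω) ω
        ≤ discountFactor X r (σ ω) ω * (w (X (σ ω) ω) - g (X (σ ω) ω)) := by
          rw [mul_comm]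
          exact mul_le_mul_of_nonneg_left (le_sub_comm.1 (hω hωA)) (discountFactor_pos _ _).le
      _ = Z ω - G ω := (discountedPayoff_sub_discountedPayoff g _ _).symm
  rw [le_div_iff₀' hε]
  calc ε * ∫ ω in A, discountFactor X r (σ ω) ω ∂P
      = ∫ ω in A, ε * discountFactor X r (σ ω) ω ∂P := (integral_const_mul _ _).symm
    _ ≤ ∫ ω in A, Z ω - G ω ∂P := integral_mono_of_nonneg
        (Eventually.of_forall fun ω => (mul_pos hε (discountFactor_pos _ ω)).le)
        (hZi.sub hGi).integrableOn hdom
    _ ≤ ∫ ω, Z ω - G ω ∂P := setIntegral_le_integral (hZi.sub hGi)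
        (Eventually.of_forall fun ω => sub_nonneg.2 (discountedPayoff_mono hgw _ ω))
    _ = ∫ ω, Z ω ∂P - ∫ ω, G ω ∂P := integral_sub hZi hGi
    _ ≤ η := by linarith

theorem stmt14_general (hX : IsStronglyProgressive 𝓕 X) (hf : Measurable f) (hg : Measurable g)
    (hr : Measurable r) (hw : Measurable w) (hfb : ∀ x, |f x| ≤ Cf) (hgb : ∀ x, |g x| ≤ Cg)
    (hrb : ∀ x, |r x| ≤ Cr) (hgw : ∀ x, g x ≤ w x)
    (hZint : ∀ t, 0 ≤ t → Integrable (discountedPayoff X r f w t) P)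
    (hZsup : ∀ ρ : Ω → ℝ, IsStoppingTime 𝓕 (fun ω => (ρ ω : WithTop ℝ)) → (∀ ω, 0 ≤ ρ ω) →
      (∃ T, ∀ ω, ρ ω ≤ T) →
      ∀ᵐ ω ∂P, (P[fun ω => discountedPayoff X r f w (ρ ω) ω |
        (isStoppingTime_const 𝓕 0).measurableSpace]) ω ≤ discountedPayoff X r f w 0 ω)
    {w₀ ε η : ℝ} (hZ0 : ∀ᵐ ω ∂P, discountedPayoff X r f w 0 ω = w₀) (hε : 0 < ε)
    (hσ : IsStoppingTime 𝓕 fun ω => (σ ω : WithTop ℝ)) (hσ0 : ∀ ω, 0 ≤ σ ω)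
    (hσb : ∃ T, ∀ ω, σ ω ≤ T) (hσval : w₀ - η ≤ ∫ ω, discountedPayoff X r f g (σ ω) ω ∂P)
    {τ : Ω → ℝ≥0∞} (hτ : Measurable τ)
    (hgap : ∀ᵐ ω ∂P, ∀ t : ℝ, 0 ≤ t → ENNReal.ofReal t < τ ω → g (X t ω) < w (X t ω) - ε) :
    ∫ ω, (if ENNReal.ofReal (σ ω) < τ ω then discountFactor X r (σ ω) ω else 0) ∂P ≤ η / ε := by
  obtain ⟨T, hσT⟩ := hσb
  obtain ⟨ω₀⟩ := P.nonempty_of_neZero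
  have hZ (ρ : Ω → ℝ) (hρ : IsStoppingTime 𝓕 fun ω => (ρ ω : WithTop ℝ))
      (hσρ : ∀ ω, σ ω ≤ ρ ω) (hρT : ∀ ω, ρ ω ≤ T) :
      ∫ ω, discountedPayoff X r f w (ρ ω) ω ∂P ≤ w₀ := by
    refine integral_le_of_condExp_le (isStoppingTime_const 𝓕 0).measurableSpace_le ?_
    filter_upwards [hZsup ρ hρ (fun ω => (hσ0 ω).trans (hσρ ω)) ⟨T, hρT⟩, hZ0] with ω hω hω0
      using hω.trans hω0.le
  have hA : MeasurableSet {ω | ENNReal.ofReal (σ ω) < τ ω} :=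
    measurableSet_lt hσ.measurable'.untopA.ennreal_ofReal hτ
  have hbound : ∫ ω in {ω | ENNReal.ofReal (σ ω) < τ ω}, discountFactor X r (σ ω) ω ∂P ≤ η / ε :=
    setIntegral_discountFactor_le hX hf hg hr hw hfb hgb hrb hgw hσ hσ0 hσT
      (hZint T ((hσ0 ω₀).trans (hσT ω₀))) hZ hσval hε hA
      (hgap.mono fun ω hω hωA => (hω (σ ω) (hσ0 ω) hωA).le)
  simpa only [← integral_indicator hA, indicator_apply, mem_ofPred_eq] using hbound

end StoppedPayoff

/-- discounted version of Statement 3: if `σ` is a bounded stopping time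
whose discounted payoff is `≥ w₀ − η` and `g(X_t) < w(X_t) − ε` strictly before `τ_ε`,
then `E[1_{σ<τ_ε} e^{−α_σ}] ≤ η/ε`. -/
theorem stmt14
    {Ω : Type*} {m0 : MeasurableSpace Ω} (P : Measure Ω) [IsProbabilityMeasure P]
    (𝓕 : Filtration ℝ m0)
    {E : Type*} [MetricSpace E] [MeasurableSpace E] [BorelSpace E]
    (X : ℝ → Ω → E) (hX : ProgMeasurable 𝓕 X)
    (f g : E → ℝ) (hf : Measurable f) (hg : Measurable g)
    (Cf Cg : ℝ) (hfb : ∀ x, |f x| ≤ Cf) (hgb : ∀ x, |g x| ≤ Cg)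
    (r : E → ℝ) (hr : Measurable r) (Cr : ℝ) (hrb : ∀ x, |r x| ≤ Cr)
    (hr0 : ∀ x, 0 ≤ r x)
    (w : E → ℝ) (hw : Measurable w) (hgw : ∀ x, g x ≤ w x)
    (hZint : ∀ t : ℝ, 0 ≤ t →
      Integrable (fun ω =>
        (∫ s in (0:ℝ)..t, Real.exp (-(∫ u in (0:ℝ)..s, r (X u ω))) * f (X s ω))
          + Real.exp (-(∫ u in (0:ℝ)..t, r (X u ω))) * w (X t ω)) P)
    (hZadp : ∀ t : ℝ, 0 ≤ t →
      StronglyMeasurable[𝓕 t] fun ω =>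
        (∫ s in (0:ℝ)..t, Real.exp (-(∫ u in (0:ℝ)..s, r (X u ω))) * f (X s ω))
          + Real.exp (-(∫ u in (0:ℝ)..t, r (X u ω))) * w (X t ω))
    (hZsup : ∀ (σ₁ σ₂ : Ω → ℝ) (h1 : IsStoppingTime 𝓕 (fun ω => (σ₁ ω : WithTop ℝ)))
      (_h2 : IsStoppingTime 𝓕 (fun ω => (σ₂ ω : WithTop ℝ))),
      (∀ ω, 0 ≤ σ₁ ω) → (∀ ω, σ₁ ω ≤ σ₂ ω) → (∃ T, ∀ ω, σ₂ ω ≤ T) →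
      ∀ᵐ ω ∂P,
        (P[(fun ω' =>
            (∫ s in (0:ℝ)..(σ₂ ω'), Real.exp (-(∫ u in (0:ℝ)..s, r (X u ω'))) * f (X s ω'))
              + Real.exp (-(∫ u in (0:ℝ)..(σ₂ ω'), r (X u ω'))) * w (X (σ₂ ω') ω')) |
            h1.measurableSpace]) ω
          ≤ (∫ s in (0:ℝ)..(σ₁ ω), Real.exp (-(∫ u in (0:ℝ)..s, r (X u ω))) * f (X s ω))
              + Real.exp (-(∫ u in (0:ℝ)..(σ₁ ω), r (X u ω))) * w (X (σ₁ ω) ω))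
    (w₀ : ℝ)
    (hZ0 : ∀ᵐ ω ∂P,
      (∫ s in (0:ℝ)..(0:ℝ), Real.exp (-(∫ u in (0:ℝ)..s, r (X u ω))) * f (X s ω))
        + Real.exp (-(∫ u in (0:ℝ)..(0:ℝ), r (X u ω))) * w (X 0 ω) = w₀)
    (ε η : ℝ) (hε : 0 < ε) (hη : 0 < η)
    (σ : Ω → ℝ) (hσ : IsStoppingTime 𝓕 (fun ω => (σ ω : WithTop ℝ))) (hσ0 : ∀ ω, 0 ≤ σ ω)
    (hσb : ∃ T, ∀ ω, σ ω ≤ T)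
    (hσval : w₀ - η ≤ ∫ ω,
      ((∫ s in (0:ℝ)..(σ ω), Real.exp (-(∫ u in (0:ℝ)..s, r (X u ω))) * f (X s ω))
        + Real.exp (-(∫ u in (0:ℝ)..(σ ω), r (X u ω))) * g (X (σ ω) ω)) ∂P)
    (τε : Ω → ℝ≥0∞)
    (hτεst : ∀ t : ℝ, MeasurableSet[𝓕 t] {ω | τε ω ≤ ENNReal.ofReal t})
    (hτε : ∀ᵐ ω ∂P, ∀ t : ℝ, 0 ≤ t → ENNReal.ofReal t < τε ω →
      g (X t ω) < w (X t ω) - ε) :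
    ∫ ω, (if ENNReal.ofReal (σ ω) < τε ω then
        Real.exp (-(∫ u in (0:ℝ)..(σ ω), r (X u ω))) else 0) ∂P ≤ η / ε :=
  stmt14_general hX hf hg hr hw hfb hgb hrb hgw hZint
    (fun ρ hρ hρ0 hρb => hZsup _ ρ (isStoppingTime_const 𝓕 0) hρ (fun _ => le_rfl) hρ0 hρb) hZ0 hε
    hσ hσ0 hσb hσval (measurable_of_measurableSet_le_ofReal fun t => 𝓕.le t _ (hτεst t)) hτε
end
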